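/- There exists an absolute constant E > 0 with the following property. Let N^{(1)}, N^{(2)}, N^{(3)} be weight sequences with (n^{(i)}_k)^{1/k} → ∞ for i = 1,2,3 and with D^{(1)} := mg(N^{(1)},N^{(2)}) < ∞ and D^{(2)} := mg(N^{(2)},N^{(3)}) < ∞. Let f : [-1,1] → ℂ be a function and assume there exist constants K, c_1, c_2 > 0, ε_0 > 0 and, for each 0 < ε ≤ ε_0, a function f_ε holomorphic on Ω_ε and continuous on the closure of Ω_ε such that sup_{z∈Ω_ε} |f_ε(z)| ≤ K and sup_{x∈[-1,1]} |f(x) − f_ε(x)| ≤ c_1·h_{n^{(1)}}(c_2·ε). Then for every 0 < b < 1, the restriction of f to (-b,b) is C^∞ and satisfies sup_{x∈(-b,b), k∈ℕ} |f^{(k)}(x)|/(σ^k·N^{(3)}_k) < ∞, where σ := 2e·D^{(1)}·D^{(2)}·c_2/(E·(1−b)). -/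

import Mathlib

open Filter Set Asymptotics MeasureTheory

noncomputable section

/-- `M` is a weight sequence: `M 0 = 1`, positive, `M 1 ≥ 1`, log-convex and
`M k ^ (1/k) → ∞`. -/
def IsWeightSeq (M : ℕ → ℝ) : Prop :=
  M 0 = 1 ∧ (∀ k, 0 < M k) ∧ 1 ≤ M 1 ∧
    (∀ k : ℕ, 1 ≤ k → M k ^ 2 ≤ M (k - 1) * M (k + 1)) ∧
    Tendsto (fun k : ℕ => M k ^ (1 / (k : ℝ))) atTop atTop

/-- The sequence `m k = M k / k!`. -/
def mseq (M : ℕ → ℝ) : ℕ → ℝ := fun k => M k / (Nat.factorial k : ℝ)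

/-- Log-convexity of a sequence. -/
def LogConvexSeq (m : ℕ → ℝ) : Prop := ∀ k : ℕ, 1 ≤ k → m k ^ 2 ≤ m (k - 1) * m (k + 1)

/-- `m k ^ (1/k) → ∞`. -/
def RootTendsToInfty (m : ℕ → ℝ) : Prop :=
  Tendsto (fun k : ℕ => m k ^ (1 / (k : ℝ))) atTop atTop

/-- Moderate growth of a sequence. -/
def ModerateGrowth (M : ℕ → ℝ) : Prop :=
  ∃ C : ℝ, 0 < C ∧ ∀ j k : ℕ, M (j + k) ≤ C ^ (j + k) * M j * M k

/-- Derivation closedness of a sequence. -/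
def DerivClosed (M : ℕ → ℝ) : Prop :=
  ∃ C : ℝ, 0 < C ∧ ∀ k : ℕ, M (k + 1) ≤ C ^ (k + 1) * M k

/-- Non-quasianalyticity: `∑_{k≥1} M (k-1) / M k = ∑_{k≥1} 1/μ_k < ∞`. -/
def NonQuasianalytic (M : ℕ → ℝ) : Prop := Summable fun k : ℕ => M k / M (k + 1)

/-- Quasianalyticity: `∑_{k≥1} 1/μ_k = ∞`. -/
def Quasianalytic (M : ℕ → ℝ) : Prop := ¬ NonQuasianalytic M

/-- The associated function `h_m (t) = inf_k m k * t ^ k`. -/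
def hFun (m : ℕ → ℝ) (t : ℝ) : ℝ := ⨅ k : ℕ, m k * t ^ k

/-- `Γ̄_m (t) = min {k | h_m t = m k * t ^ k}`. -/
def GammaBar (m : ℕ → ℝ) (t : ℝ) : ℕ := sInf {k : ℕ | hFun m t = m k * t ^ k}

/-- `Γ̲_m (t) = min {k | m (k+1) / m k ≥ 1 / t}`. -/
def GammaLow (m : ℕ → ℝ) (t : ℝ) : ℕ := sInf {k : ℕ | 1 / t ≤ m (k + 1) / m k}

/-- The set whose supremum is `mg (M, N)`. -/
def mgSet (M N : ℕ → ℝ) : Set ℝ :=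
  {x | ∃ j k : ℕ, 1 ≤ j + k ∧ x = (M (j + k) / (N j * N k)) ^ (1 / (j + k : ℝ))}

/-- `mg (M, N) = sup_{j+k ≥ 1} (M (j+k) / (N j * N k)) ^ (1/(j+k))`. -/
def mg (M N : ℕ → ℝ) : ℝ := sSup (mgSet M N)

/-- `mg (M, N) < ∞`. -/
def MgFinite (M N : ℕ → ℝ) : Prop := BddAbove (mgSet M N)

/-- A weight sequence is regular: `m k ^ (1/k) → ∞`, derivation closed, and
`Γ̄_m (C t) ≤ Γ̲_m t` for some `C ≥ 1`. -/
def RegularWS (M : ℕ → ℝ) : Prop :=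
  RootTendsToInfty (mseq M) ∧ DerivClosed M ∧
    ∃ C : ℝ, 1 ≤ C ∧ ∀ t : ℝ, 0 < t → GammaBar (mseq M) (C * t) ≤ GammaLow (mseq M) t

/-- `f` is of class `E^{M}` (Roumieu) on the open set `U`. -/
def RoumieuOn {E : Type*} [NormedAddCommGroup E] [NormedSpace ℝ E]
    (M : ℕ → ℝ) (f : E → ℂ) (U : Set E) : Prop :=
  ContDiffOn ℝ (⊤ : ℕ∞) f U ∧
    ∀ V : Set E, IsOpen V → IsCompact (closure V) → closure V ⊆ U →
      ∃ C σ : ℝ, 0 < C ∧ 0 < σ ∧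
        ∀ x ∈ V, ∀ k : ℕ, ‖iteratedFDerivWithin ℝ k f U x‖ ≤ C * σ ^ k * M k

/-- `f` is of class `E^{(M)}` (Beurling) on the open set `U`. -/
def BeurlingOn {E : Type*} [NormedAddCommGroup E] [NormedSpace ℝ E]
    (M : ℕ → ℝ) (f : E → ℂ) (U : Set E) : Prop :=
  ContDiffOn ℝ (⊤ : ℕ∞) f U ∧
    ∀ V : Set E, IsOpen V → IsCompact (closure V) → closure V ⊆ U →
      ∀ σ : ℝ, 0 < σ → ∃ C : ℝ, 0 < C ∧
        ∀ x ∈ V, ∀ k : ℕ, ‖iteratedFDerivWithin ℝ k f U x‖ ≤ C * σ ^ k * M k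

/-- A weight matrix: a nonempty, pointwise totally ordered family of weight sequences. -/
def IsWeightMatrix (W : Set (ℕ → ℝ)) : Prop :=
  W.Nonempty ∧ (∀ M ∈ W, IsWeightSeq M) ∧
    ∀ M ∈ W, ∀ N ∈ W, (∀ k, M k ≤ N k) ∨ (∀ k, N k ≤ M k)

/-- R-regularity of a weight matrix. -/
def RRegular (W : Set (ℕ → ℝ)) : Prop :=
  (∀ M ∈ W, RootTendsToInfty (mseq M)) ∧
    (∀ M ∈ W, ∃ N ∈ W, ∃ C : ℝ, 1 ≤ C ∧ ∀ j : ℕ, M (j + 1) ≤ C ^ (j + 1) * N j) ∧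
    (∀ M ∈ W, ∃ N ∈ W, ∃ C : ℝ, 1 ≤ C ∧
      ∀ t : ℝ, 0 < t → GammaBar (mseq N) (C * t) ≤ GammaLow (mseq M) t)

/-- B-regularity of a weight matrix. -/
def BRegular (W : Set (ℕ → ℝ)) : Prop :=
  (∀ M ∈ W, RootTendsToInfty (mseq M)) ∧
    (∀ M ∈ W, ∃ N ∈ W, ∃ C : ℝ, 1 ≤ C ∧ ∀ j : ℕ, N (j + 1) ≤ C ^ j * M j) ∧
    (∀ M ∈ W, ∃ N ∈ W, ∃ C : ℝ, 1 ≤ C ∧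
      ∀ t : ℝ, 0 < t → GammaBar (mseq M) (C * t) ≤ GammaLow (mseq N) t)

/-- R-moderate growth of a weight matrix. -/
def RModerateGrowth (W : Set (ℕ → ℝ)) : Prop := ∀ M ∈ W, ∃ N ∈ W, MgFinite M N

/-- B-moderate growth of a weight matrix. -/
def BModerateGrowth (W : Set (ℕ → ℝ)) : Prop := ∀ M ∈ W, ∃ N ∈ W, MgFinite N M

/-- `f` is of class `E^{W}` (Roumieu, weight matrix) on the open set `U`. -/
def MatrixRoumieuOn {E : Type*} [NormedAddCommGroup E] [NormedSpace ℝ E]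
    (W : Set (ℕ → ℝ)) (f : E → ℂ) (U : Set E) : Prop :=
  ContDiffOn ℝ (⊤ : ℕ∞) f U ∧
    ∀ V : Set E, IsOpen V → IsCompact (closure V) → closure V ⊆ U →
      ∃ M ∈ W, ∃ C σ : ℝ, 0 < C ∧ 0 < σ ∧
        ∀ x ∈ V, ∀ k : ℕ, ‖iteratedFDerivWithin ℝ k f U x‖ ≤ C * σ ^ k * M k

/-- `f` is of class `E^{(W)}` (Beurling, weight matrix) on the open set `U`. -/
def MatrixBeurlingOn {E : Type*} [NormedAddCommGroup E] [NormedSpace ℝ E]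
    (W : Set (ℕ → ℝ)) (f : E → ℂ) (U : Set E) : Prop :=
  ContDiffOn ℝ (⊤ : ℕ∞) f U ∧
    ∀ V : Set E, IsOpen V → IsCompact (closure V) → closure V ⊆ U →
      ∀ M ∈ W, ∀ σ : ℝ, 0 < σ → ∃ C : ℝ, 0 < C ∧
        ∀ x ∈ V, ∀ k : ℕ, ‖iteratedFDerivWithin ℝ k f U x‖ ≤ C * σ ^ k * M k

/-- `ω` is a weight function. -/
def IsWeightFunction (ω : ℝ → ℝ) : Prop :=
  ContinuousOn ω (Ici 0) ∧ MonotoneOn ω (Ici 0) ∧ (∀ t ∈ Ici (0 : ℝ), 0 ≤ ω t) ∧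
    ((fun t => ω (2 * t)) =O[atTop] ω) ∧ (ω =o[atTop] fun t : ℝ => t) ∧
    ((fun t => Real.log t) =o[atTop] ω) ∧ ConvexOn ℝ (Ici 0) fun t => ω (Real.exp t)

/-- The Young conjugate `φ*_ω (s) = sup_{t ≥ 0} (s t - ω (e^t))`. -/
def phiStar (ω : ℝ → ℝ) (s : ℝ) : ℝ := sSup ((fun t => s * t - ω (Real.exp t)) '' Ici 0)

/-- Non-quasianalyticity of a weight function. -/
def NonQuasianalyticW (ω : ℝ → ℝ) : Prop := IntegrableOn (fun t => ω t / t ^ 2) (Ici 1)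

/-- `f` is of class `E^{ω}` (Roumieu) on the open set `U`. -/
def OmegaRoumieuOn {E : Type*} [NormedAddCommGroup E] [NormedSpace ℝ E]
    (ω : ℝ → ℝ) (f : E → ℂ) (U : Set E) : Prop :=
  ContDiffOn ℝ (⊤ : ℕ∞) f U ∧
    ∀ V : Set E, IsOpen V → IsCompact (closure V) → closure V ⊆ U →
      ∃ C ρ : ℝ, 0 < C ∧ 0 < ρ ∧
        ∀ x ∈ V, ∀ k : ℕ,
          ‖iteratedFDerivWithin ℝ k f U x‖ ≤ C * Real.exp (phiStar ω (ρ * k) / ρ)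

/-- `f` is of class `E^{(ω)}` (Beurling) on the open set `U`. -/
def OmegaBeurlingOn {E : Type*} [NormedAddCommGroup E] [NormedSpace ℝ E]
    (ω : ℝ → ℝ) (f : E → ℂ) (U : Set E) : Prop :=
  ContDiffOn ℝ (⊤ : ℕ∞) f U ∧
    ∀ V : Set E, IsOpen V → IsCompact (closure V) → closure V ⊆ U →
      ∀ ρ : ℝ, 0 < ρ → ∃ C : ℝ, 0 < C ∧
        ∀ x ∈ V, ∀ k : ℕ,
          ‖iteratedFDerivWithin ℝ k f U x‖ ≤ C * Real.exp (phiStar ω (ρ * k) / ρ)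

/-- The open ellipse `Ω_ε` with vertices `± cosh ε` and co-vertices `± i sinh ε`. -/
def OmegaE (ε : ℝ) : Set ℂ :=
  {z : ℂ | (z.re / Real.cosh ε) ^ 2 + (z.im / Real.sinh ε) ^ 2 < 1}

/-- The sequence space `Λ^{M}`. -/
def Lambda (M : ℕ → ℝ) : Set (ℕ → ℂ) :=
  {c | ∃ ρ : ℝ, 0 < ρ ∧ ∃ C : ℝ, ∀ k, ‖c k‖ ≤ C * ρ ^ k * M k}

/-- `L(M)`: all non-quasianalytic weight sequences `N ≥ M` with `n = N/k!` log-convex. -/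
def LM (M : ℕ → ℝ) : Set (ℕ → ℝ) :=
  {N | IsWeightSeq N ∧ NonQuasianalytic N ∧ (∀ k, M k ≤ N k) ∧ LogConvexSeq (mseq N)}

/-- A quasianalytic weight sequence `M` is intersectable if `Λ^{M} = ⋂_{N ∈ L(M)} Λ^{N}`. -/
def Intersectable (M : ℕ → ℝ) : Prop := Lambda M = ⋂ N ∈ LM M, Lambda N

/-!
The map `cosh` sends the strip `|Re s| < ε` onto the ellipse `Ω_ε` and the imaginary axis onto
`[-1, 1]`. Hence the three lines theorem shows that a holomorphic function on `Ω_ε` which is bounded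
by `B` there and by `M` on `[-1, 1]` is bounded by `√(M B)` on `Ω_{ε/4}`.

Apply this to the difference of the approximants for `ε` and `ε / 2`, where `B` is constant and `M`
is a multiple of `h_{n⁽¹⁾}(c₂ ε)`. Using moderate growth twice, first to split an index `2 (k + 1)`
in two halves and then to split `k + 1` into `k` and `1`, one bounds `h_{n⁽¹⁾}(t)` by the square of
a multiple of `n⁽³⁾_k t ^ (k + 1)`, so that nothing is lost by taking the square root. The Cauchy
estimates on discs of radius `(ε / 8) (1 - b) / 2`, contained in `Ω_{ε/8}`, consume `k` of the
`k + 1` powers of `ε`, and the remaining power makes the series of `k`-th derivatives converge along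
`ε / 2 ^ j`. The factor `16` from the radius is `2 e / E` for `E = e / 8`.
-/

section Ellipse

lemma re_cosh (s : ℂ) : (Complex.cosh s).re = Real.cosh s.re * Real.cos s.im := by
  rw [← Complex.re_add_im s, Complex.cosh_add, Complex.cosh_mul_I, Complex.sinh_mul_I,
    ← Complex.ofReal_cosh, ← Complex.ofReal_sinh, ← Complex.ofReal_cos, ← Complex.ofReal_sin]
  simp [-Complex.re_add_im, -Complex.ofReal_cosh, -Complex.ofReal_sinh, -Complex.ofReal_cos,
    -Complex.ofReal_sin]

lemma im_cosh (s : ℂ) : (Complex.cosh s).im = Real.sinh s.re * Real.sin s.im := by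
  rw [← Complex.re_add_im s, Complex.cosh_add, Complex.cosh_mul_I, Complex.sinh_mul_I,
    ← Complex.ofReal_cosh, ← Complex.ofReal_sinh, ← Complex.ofReal_cos, ← Complex.ofReal_sin]
  simp [-Complex.re_add_im, -Complex.ofReal_cosh, -Complex.ofReal_sinh, -Complex.ofReal_cos,
    -Complex.ofReal_sin]

lemma cosh_mem_omegaE_iff {ε : ℝ} (hε : 0 < ε) {s : ℂ} :
    Complex.cosh s ∈ OmegaE ε ↔ |s.re| < ε := by
  have hcosh : (Real.cosh s.re / Real.cosh ε) ^ 2 < 1 ↔ |s.re| < ε := by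
    rw [sq_lt_one_iff₀ (by positivity), div_lt_one (Real.cosh_pos ε), Real.cosh_lt_cosh,
      abs_of_pos hε]
  have hsinh : (Real.sinh s.re / Real.sinh ε) ^ 2 < 1 ↔ |s.re| < ε := by
    have hpos : 0 < Real.sinh ε := Real.sinh_pos_iff.2 hε
    rw [sq_lt_one_iff_abs_lt_one, abs_div, abs_of_pos hpos, div_lt_one hpos, Real.abs_sinh,
      Real.sinh_lt_sinh]
  -- The defining expression is a convex combination of the two squares above.
  have hmem : Complex.cosh s ∈ OmegaE ε ↔
      Real.cos s.im ^ 2 * (Real.cosh s.re / Real.cosh ε) ^ 2 +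
        Real.sin s.im ^ 2 * (Real.sinh s.re / Real.sinh ε) ^ 2 < 1 := by
    rw [OmegaE, Set.mem_ofPred_eq, re_cosh, im_cosh]
    ring_nf
  rw [hmem]
  have hsum := Real.cos_sq_add_sin_sq s.im
  have hcos := sq_nonneg (Real.cos s.im)
  have hsin := sq_nonneg (Real.sin s.im)
  constructor
  · contrapose!
    intro h
    nlinarith [not_lt.1 (hcosh.not.2 h.not_gt), not_lt.1 (hsinh.not.2 h.not_gt)]
  · intro h
    have hconv := (convex_Iio (1 : ℝ)) (hcosh.2 h) (hsinh.2 h) hcos hsin hsum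
    simpa only [smul_eq_mul, mem_Iio] using hconv

lemma exists_cosh_eq_of_mem_omegaE {ε : ℝ} (hε : 0 < ε) {z : ℂ} (hz : z ∈ OmegaE ε) :
    ∃ s : ℂ, Complex.cosh s = z ∧ s.re ∈ Ico 0 ε := by
  obtain ⟨w, rfl⟩ := Complex.cos_surjective z
  rw [← Complex.cosh_mul_I] at hz ⊢
  have hre := (cosh_mem_omegaE_iff hε).1 hz
  rcases le_total 0 (w * Complex.I).re with h | h
  · exact ⟨_, rfl, h, (le_abs_self _).trans_lt hre⟩
  · exact ⟨-(w * Complex.I), Complex.cosh_neg _, neg_nonneg.2 h, (neg_le_abs _).trans_lt hre⟩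

lemma isOpen_omegaE (ε : ℝ) : IsOpen (OmegaE ε) :=
  isOpen_lt (by fun_prop) (by fun_prop)

lemma omegaE_subset_omegaE {δ ε : ℝ} (hδ : 0 < δ) (hδε : δ ≤ ε) : OmegaE δ ⊆ OmegaE ε := by
  intro z hz
  obtain ⟨s, rfl, -⟩ := exists_cosh_eq_of_mem_omegaE hδ hz
  exact (cosh_mem_omegaE_iff (hδ.trans_le hδε)).2
    (((cosh_mem_omegaE_iff hδ).1 hz).trans_le hδε)

lemma ofReal_mem_omegaE {ε x : ℝ} (hε : 0 < ε) (hx : x ∈ Icc (-1) 1) : (x : ℂ) ∈ OmegaE ε := by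
  have hcosh : Complex.cosh (Real.arccos x * Complex.I) = x := by
    rw [Complex.cosh_mul_I, ← Complex.ofReal_cos, Real.cos_arccos hx.1 hx.2]
  rw [← hcosh, cosh_mem_omegaE_iff hε]
  simpa using hε

lemma closedBall_subset_omegaE {b x δ : ℝ} (hb : b < 1) (hx : |x| ≤ b) (hδ : 0 < δ)
    (hδ1 : δ ≤ 1) : Metric.closedBall (x : ℂ) (δ * (1 - b) / 2) ⊆ OmegaE δ := by
  intro z hz
  rw [mem_closedBall_iff_norm] at hz
  have hre : |z.re - x| ≤ δ * (1 - b) / 2 := by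
    simpa using (Complex.abs_re_le_norm (z - x)).trans hz
  have him : |z.im| ≤ δ * (1 - b) / 2 := by
    simpa using (Complex.abs_im_le_norm (z - x)).trans hz
  have hsinh : δ ≤ Real.sinh δ := Real.self_le_sinh_iff.2 hδ.le
  have hre' : |z.re / Real.cosh δ| ≤ (1 + b) / 2 := by
    rw [abs_div, abs_of_pos (Real.cosh_pos δ)]
    refine (div_le_self (abs_nonneg _) (Real.one_le_cosh δ)).trans ?_
    nlinarith [abs_sub_abs_le_abs_sub z.re x]
  have him' : |z.im / Real.sinh δ| ≤ (1 - b) / 2 := by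
    rw [abs_div, abs_of_pos (hδ.trans_le hsinh), div_le_iff₀ (hδ.trans_le hsinh)]
    nlinarith
  rw [OmegaE, Set.mem_ofPred_eq]
  nlinarith [sq_le_sq' (abs_le.1 hre').1 (abs_le.1 hre').2,
    sq_le_sq' (abs_le.1 him').1 (abs_le.1 him').2, (abs_nonneg x).trans hx]

end Ellipse

section Interpolation

variable {F : Type*} [NormedAddCommGroup F] [NormedSpace ℂ F]

lemma rpow_one_sub_mul_rpow_le_sqrt {a c t : ℝ} (ha : 0 ≤ a) (hac : a ≤ c)
    (ht : t ∈ Icc 0 (1 / 2)) :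
    a ^ (1 - t) * c ^ t ≤ √(a * c) := by
  have ht' : 0 ≤ 1 / 2 - t := sub_nonneg.2 ht.2
  calc a ^ (1 - t) * c ^ t = a ^ (1 / 2 : ℝ) * a ^ (1 / 2 - t) * c ^ t := by
        rw [← Real.rpow_add_of_nonneg ha (by norm_num) ht']
        ring_nf
    _ ≤ a ^ (1 / 2 : ℝ) * c ^ (1 / 2 - t) * c ^ t := by
        have hc : 0 ≤ c := ha.trans hac
        gcongr
    _ = √(a * c) := by
        rw [mul_assoc, ← Real.rpow_add_of_nonneg (ha.trans hac) ht' ht.1, sub_add_cancel,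
          Real.sqrt_eq_rpow, Real.mul_rpow ha (ha.trans hac)]

open Complex.HadamardThreeLines in
lemma norm_cosh_le_interp {δ ε M B : ℝ} (hδ : 0 < δ) (hδε : δ < ε) {g : ℂ → F}
    (hg : DifferentiableOn ℂ g (OmegaE ε)) (hgB : ∀ z ∈ OmegaE ε, ‖g z‖ ≤ B)
    (hgM : ∀ x ∈ Icc (-1 : ℝ) 1, ‖g x‖ ≤ M) {s : ℂ} (hs : s.re ∈ Icc 0 δ) :
    ‖g (Complex.cosh s)‖ ≤ M ^ (1 - s.re / δ) * B ^ (s.re / δ) := by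
  have hmem : ∀ w ∈ verticalClosedStrip 0 δ, Complex.cosh w ∈ OmegaE ε := fun w hw =>
    (cosh_mem_omegaE_iff (hδ.trans hδε)).2 ((abs_of_nonneg hw.1).trans_lt (hw.2.trans_lt hδε))
  have hdiff : DiffContOnCl ℂ (fun w => g (Complex.cosh w)) (verticalStrip 0 δ) := by
    have hsub : verticalStrip 0 δ ⊆ verticalClosedStrip 0 δ := preimage_mono Ioo_subset_Icc_self
    have hclosure : closure (verticalStrip 0 δ) ⊆ verticalClosedStrip 0 δ :=
      closure_minimal hsub (isClosed_Icc.preimage Complex.continuous_re)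
    exact (hg.comp Complex.differentiable_cosh.differentiableOn
      fun w hw => hmem w (hclosure hw)).diffContOnCl
  have hleft : ∀ w ∈ Complex.re ⁻¹' {0}, ‖g (Complex.cosh w)‖ ≤ M := by
    intro w (hw : w.re = 0)
    have hcosh : Complex.cosh w = (Real.cos w.im : ℝ) :=
      Complex.ext (by rw [re_cosh, hw, Complex.ofReal_re]; simp) (by rw [im_cosh, hw]; simp)
    rw [hcosh]
    exact hgM _ (Real.cos_mem_Icc _)
  have hright : ∀ w ∈ Complex.re ⁻¹' {δ}, ‖g (Complex.cosh w)‖ ≤ B :=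
    fun w (hw : w.re = δ) => hgB _ (hmem w ⟨hw ▸ hδ.le, hw.le⟩)
  simpa only [sub_zero] using norm_le_interp_of_mem_verticalClosedStrip' hδ hs hdiff
    ⟨B, forall_mem_image.2 fun w hw => hgB _ (hmem w hw)⟩ hleft hright

lemma norm_le_sqrt_mul_of_mem_omegaE {ε M B : ℝ} (hε : 0 < ε) {g : ℂ → F}
    (hg : DifferentiableOn ℂ g (OmegaE ε)) (hgB : ∀ z ∈ OmegaE ε, ‖g z‖ ≤ B)
    (hgM : ∀ x ∈ Icc (-1 : ℝ) 1, ‖g x‖ ≤ M) {z : ℂ} (hz : z ∈ OmegaE (ε / 4)) :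
    ‖g z‖ ≤ √(M * B) := by
  have hmin : ∀ x ∈ Icc (-1 : ℝ) 1, ‖g x‖ ≤ min M B := fun x hx =>
    le_min (hgM x hx) (hgB x (ofReal_mem_omegaE hε hx))
  have hmin0 : 0 ≤ min M B := (norm_nonneg _).trans (hmin 0 (by norm_num))
  obtain ⟨s, rfl, hs0, hs⟩ := exists_cosh_eq_of_mem_omegaE (by positivity) hz
  have hexp : s.re / (ε / 2) ∈ Icc 0 (1 / 2) :=
    ⟨by positivity, by rw [div_le_iff₀ (by positivity)]; linarith⟩
  calc ‖g (Complex.cosh s)‖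
      ≤ min M B ^ (1 - s.re / (ε / 2)) * B ^ (s.re / (ε / 2)) :=
        norm_cosh_le_interp (by positivity) (by linarith) hg hgB hmin ⟨hs0, by linarith⟩
    _ ≤ √(min M B * B) := rpow_one_sub_mul_rpow_le_sqrt hmin0 (min_le_right _ _) hexp
    _ ≤ √(M * B) := by
        have hB : 0 ≤ B := hmin0.trans (min_le_right _ _)
        gcongr
        exact min_le_left _ _

variable [CompleteSpace F]

lemma norm_iteratedDeriv_ofReal_le {b x δ C : ℝ} (hb : b < 1) (hx : |x| ≤ b) (hδ : 0 < δ)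
    (hδ1 : δ ≤ 1) {g : ℂ → F} (hg : DifferentiableOn ℂ g (OmegaE δ))
    (hC : ∀ z ∈ OmegaE δ, ‖g z‖ ≤ C) (k : ℕ) :
    ‖iteratedDeriv k g x‖ ≤ k.factorial * C / (δ * (1 - b) / 2) ^ k := by
  have hr : 0 < δ * (1 - b) / 2 := by linarith [mul_pos hδ (sub_pos.2 hb)]
  have hball := closedBall_subset_omegaE hb hx hδ hδ1
  refine Complex.norm_iteratedDeriv_le_of_forall_mem_sphere_norm_le k hr ?_
    fun z hz => hC z (hball (Metric.sphere_subset_closedBall hz))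
  exact (hg.mono (Metric.closure_ball_subset_closedBall.trans hball)).diffContOnCl

lemma norm_iteratedDeriv_ofReal_le_sqrt {b x ε M B : ℝ} (hb : b < 1) (hx : |x| ≤ b) (hε : 0 < ε)
    (hε4 : ε ≤ 4) {g : ℂ → F} (hg : DifferentiableOn ℂ g (OmegaE ε))
    (hgB : ∀ z ∈ OmegaE ε, ‖g z‖ ≤ B) (hgM : ∀ x ∈ Icc (-1 : ℝ) 1, ‖g x‖ ≤ M) (k : ℕ) :
    ‖iteratedDeriv k g x‖ ≤ k.factorial * √(M * B) / (ε * (1 - b) / 8) ^ k := by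
  have hcauchy := norm_iteratedDeriv_ofReal_le hb hx (by positivity : 0 < ε / 4) (by linarith)
    (hg.mono (omegaE_subset_omegaE (by positivity) (by linarith)))
    (fun z hz => norm_le_sqrt_mul_of_mem_omegaE hε hg hgB hgM hz) k
  convert hcauchy using 3
  ring

end Interpolation

section Smoothness

variable {𝕜 F : Type*} [RCLike 𝕜] [NormedAddCommGroup F] [NormedSpace 𝕜 F] {s : Set 𝕜}

lemma eqOn_iteratedDerivWithin_of_hasDerivAt (hs : IsOpen s) {f : 𝕜 → F} {f' : ℕ → 𝕜 → F}
    (hf : EqOn f (f' 0) s) (hf' : ∀ k, ∀ x ∈ s, HasDerivAt (f' k) (f' (k + 1) x) x) (k : ℕ) :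
    EqOn (iteratedDerivWithin k f s) (f' k) s := by
  induction k with
  | zero => simpa only [iteratedDerivWithin_zero] using hf
  | succ k ih =>
    intro x hx
    rw [iteratedDerivWithin_succ, derivWithin_congr ih (ih hx)]
    exact (hf' k x hx).hasDerivWithinAt.derivWithin (hs.uniqueDiffWithinAt hx)

lemma contDiffOn_of_hasDerivAt (hs : IsOpen s) {f : 𝕜 → F} {f' : ℕ → 𝕜 → F}
    (hf : EqOn f (f' 0) s) (hf' : ∀ k, ∀ x ∈ s, HasDerivAt (f' k) (f' (k + 1) x) x) :
    ContDiffOn 𝕜 (⊤ : ℕ∞) f s :=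
  contDiffOn_of_differentiableOn_deriv fun k _ =>
    DifferentiableOn.congr (fun x hx => (hf' k x hx).differentiableAt.differentiableWithinAt)
      (eqOn_iteratedDerivWithin_of_hasDerivAt hs hf hf' k)

lemma tendstoUniformlyOn_add_tsum_sub {α E : Type*} [NormedAddCommGroup E] [CompleteSpace E]
    {t : Set α} {u : ℕ → ℝ} (hu : Summable u) {H : ℕ → α → E}
    (hH : ∀ n, ∀ x ∈ t, ‖H (n + 1) x - H n x‖ ≤ u n) :
    TendstoUniformlyOn H (fun x => H 0 x + ∑' n, (H (n + 1) x - H n x)) atTop t := by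
  have hsum := tendstoUniformlyOn_tsum_nat hu hH
  rw [Metric.tendstoUniformlyOn_iff] at hsum ⊢
  intro ε hε
  filter_upwards [hsum ε hε] with n hn x hx
  have htel : H n x = H 0 x + ∑ i ∈ Finset.range n, (H (i + 1) x - H i x) := by
    rw [Finset.sum_range_sub (fun i => H i x), add_sub_cancel]
  rw [htel, dist_add_left]
  exact hn x hx

theorem contDiffOn_and_norm_iteratedDerivWithin_le_of_summable [CompleteSpace F] (hs : IsOpen s)
    {f : 𝕜 → F} {H : ℕ → 𝕜 → F} {u : ℕ → ℕ → ℝ} (hH : ∀ n, ContDiffOn 𝕜 (⊤ : ℕ∞) (H n) s)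
    (hu : ∀ k, Summable (u k))
    (hHu : ∀ k n, ∀ x ∈ s,
      ‖iteratedDerivWithin k (H (n + 1)) s x - iteratedDerivWithin k (H n) s x‖ ≤ u k n)
    (hf : ∀ x ∈ s, Tendsto (fun n => H n x) atTop (nhds (f x))) :
    ContDiffOn 𝕜 (⊤ : ℕ∞) f s ∧ ∀ k, ∀ x ∈ s,
      ‖iteratedDerivWithin k f s x‖ ≤ ‖iteratedDerivWithin k (H 0) s x‖ + ∑' n, u k n := by
  set f' : ℕ → 𝕜 → F := fun k x => iteratedDerivWithin k (H 0) s x +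
    ∑' n, (iteratedDerivWithin k (H (n + 1)) s x - iteratedDerivWithin k (H n) s x)
  have hlim (k : ℕ) :
      TendstoUniformlyOn (fun n => iteratedDerivWithin k (H n) s) (f' k) atTop s :=
    tendstoUniformlyOn_add_tsum_sub (hu k) (hHu k)
  have hderiv (k : ℕ) (x : 𝕜) (hx : x ∈ s) : HasDerivAt (f' k) (f' (k + 1) x) x := by
    refine hasDerivAt_of_tendstoUniformlyOn hs (hlim (k + 1)) (.of_forall fun n y hy => ?_)
      (fun y hy => (hlim k).tendsto_at hy) hx
    rw [iteratedDerivWithin_succ]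
    exact (((hH n).differentiableOn_iteratedDerivWithin (by exact_mod_cast WithTop.coe_lt_top k)
      hs.uniqueDiffOn).differentiableAt (hs.mem_nhds hy)).hasDerivAt.congr_deriv
        (derivWithin_of_isOpen hs hy).symm
  have hf0 : EqOn f (f' 0) s := fun x hx => by
    refine tendsto_nhds_unique (hf x hx) ?_
    simpa only [iteratedDerivWithin_zero] using (hlim 0).tendsto_at hx
  refine ⟨contDiffOn_of_hasDerivAt hs hf0 hderiv, fun k x hx => ?_⟩
  rw [eqOn_iteratedDerivWithin_of_hasDerivAt hs hf0 hderiv k hx]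
  refine (norm_add_le _ _).trans (add_le_add_right ?_ _)
  exact tsum_of_norm_bounded (hu k).hasSum fun n => hHu k n x hx

end Smoothness

section RealRestriction

variable {F : Type*} [NormedAddCommGroup F] [NormedSpace ℂ F] [CompleteSpace F]
  {V : Set ℂ} {s : Set ℝ} {g : ℂ → F}

lemma hasDerivAt_iteratedDeriv_ofReal {x : ℝ} (hg : AnalyticAt ℂ g x) (k : ℕ) :
    HasDerivAt (fun y : ℝ => iteratedDeriv k g y) (iteratedDeriv (k + 1) g x) x := by
  have hdiff := (hg.iterated_deriv k).differentiableAt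
  rw [← iteratedDeriv_eq_iterate] at hdiff
  rw [iteratedDeriv_succ]
  simpa only [Complex.ofRealCLM_apply, Complex.ofReal_one, one_smul] using!
    hdiff.hasDerivAt.scomp x Complex.ofRealCLM.hasDerivAt

lemma contDiffOn_comp_ofReal (hV : IsOpen V) (hs : IsOpen s)
    (hsV : ∀ x ∈ s, (x : ℂ) ∈ V) (hg : DifferentiableOn ℂ g V) :
    ContDiffOn ℝ (⊤ : ℕ∞) (fun x : ℝ => g x) s :=
  contDiffOn_of_hasDerivAt hs (f' := fun k x => iteratedDeriv k g x)
    (fun x _ => by simp only [iteratedDeriv_zero])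
    fun k x hx => hasDerivAt_iteratedDeriv_ofReal (hg.analyticAt (hV.mem_nhds (hsV x hx))) k

lemma eqOn_iteratedDerivWithin_comp_ofReal (hV : IsOpen V) (hs : IsOpen s)
    (hsV : ∀ x ∈ s, (x : ℂ) ∈ V) (hg : DifferentiableOn ℂ g V) (k : ℕ) :
    EqOn (iteratedDerivWithin k (fun x : ℝ => g x) s) (fun x => iteratedDeriv k g x) s :=
  eqOn_iteratedDerivWithin_of_hasDerivAt hs (f' := fun k x => iteratedDeriv k g x)
    (fun x _ => by simp only [iteratedDeriv_zero])
    (fun k x hx => hasDerivAt_iteratedDeriv_ofReal (hg.analyticAt (hV.mem_nhds (hsV x hx))) k) k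

end RealRestriction

section WeightSequence

variable {M N N₁ N₂ N₃ m : ℕ → ℝ} {s t : ℝ}

lemma mseq_pos (hM : ∀ k, 0 < M k) (k : ℕ) : 0 < mseq M k :=
  div_pos (hM k) (Nat.cast_pos.2 k.factorial_pos)

lemma factorial_mul_mseq (M : ℕ → ℝ) (k : ℕ) : k.factorial * mseq M k = M k :=
  mul_div_cancel₀ _ (Nat.cast_ne_zero.2 k.factorial_ne_zero)

lemma mg_pos (hM : ∀ k, 0 < M k) (hN : ∀ k, 0 < N k) (h : MgFinite M N) : 0 < mg M N := by
  have hpos : 0 < (M (1 + 0) / (N 1 * N 0)) ^ (1 / ((1 : ℕ) + (0 : ℕ) : ℝ)) :=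
    Real.rpow_pos_of_pos (div_pos (hM _) (mul_pos (hN 1) (hN 0))) _
  exact hpos.trans_le (le_csSup h ⟨1, 0, by norm_num, rfl⟩)

lemma le_mg_pow_mul (hM : ∀ k, 0 ≤ M k) (hN : ∀ k, 0 < N k) (h : MgFinite M N) {j k : ℕ}
    (hjk : 1 ≤ j + k) : M (j + k) ≤ mg M N ^ (j + k) * (N j * N k) := by
  have hNN : 0 < N j * N k := mul_pos (hN j) (hN k)
  have hquot : 0 ≤ M (j + k) / (N j * N k) := div_nonneg (hM _) hNN.le
  have hroot : (M (j + k) / (N j * N k)) ^ (((j + k : ℕ) : ℝ)⁻¹) ≤ mg M N :=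
    le_csSup h ⟨j, k, hjk, by rw [one_div, Nat.cast_add]⟩
  rw [← div_le_iff₀ hNN, ← Real.rpow_inv_natCast_pow hquot (Nat.one_le_iff_ne_zero.1 hjk)]
  exact pow_le_pow_left₀ (Real.rpow_nonneg hquot _) hroot _

lemma mseq_add_le (hM : ∀ k, 0 ≤ M k) (hN : ∀ k, 0 < N k) (h : MgFinite M N) {j k : ℕ}
    (hjk : 1 ≤ j + k) :
    mseq M (j + k) ≤ mg M N ^ (j + k) * (mseq N j * mseq N k) := by
  have hfact : (j.factorial * k.factorial : ℝ) ≤ (j + k).factorial := mod_cast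
    Nat.le_of_dvd (j + k).factorial_pos (Nat.factorial_mul_factorial_dvd_factorial_add j k)
  calc mseq M (j + k) ≤ M (j + k) / (j.factorial * k.factorial) :=
        div_le_div_of_nonneg_left (hM _) (by positivity) hfact
    _ ≤ mg M N ^ (j + k) * (N j * N k) / (j.factorial * k.factorial) := by
        gcongr
        exact le_mg_pow_mul hM hN h hjk
    _ = mg M N ^ (j + k) * (mseq N j * mseq N k) := by
        rw [mul_div_assoc, mseq, mseq, div_mul_div_comm]

lemma bddBelow_range_mul_pow (hm : ∀ k, 0 ≤ m k) (ht : 0 ≤ t) :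
    BddBelow (range fun k => m k * t ^ k) :=
  ⟨0, forall_mem_range.2 fun k => mul_nonneg (hm k) (pow_nonneg ht k)⟩

lemma hFun_le (hm : ∀ k, 0 ≤ m k) (ht : 0 ≤ t) (k : ℕ) : hFun m t ≤ m k * t ^ k :=
  ciInf_le (bddBelow_range_mul_pow hm ht) k

lemma hFun_nonneg (hm : ∀ k, 0 ≤ m k) (ht : 0 ≤ t) : 0 ≤ hFun m t :=
  Real.iInf_nonneg fun k => mul_nonneg (hm k) (pow_nonneg ht k)

lemma hFun_mono (hm : ∀ k, 0 ≤ m k) (hs : 0 ≤ s) (hst : s ≤ t) : hFun m s ≤ hFun m t :=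
  ciInf_mono (bddBelow_range_mul_pow hm hs) fun k =>
    mul_le_mul_of_nonneg_left (pow_le_pow_left₀ hs hst k) (hm k)

lemma tendsto_hFun_zero (hm : ∀ k, 0 ≤ m k) : Tendsto (hFun m) (nhdsWithin 0 (Ici 0)) (nhds 0) := by
  have hlin : Tendsto (fun t => m 1 * t ^ 1) (nhdsWithin 0 (Ici 0)) (nhds 0) :=
    ((by fun_prop : Continuous fun t => m 1 * t ^ 1).tendsto' 0 0 (by simp)).mono_left
      nhdsWithin_le_nhds
  refine tendsto_of_tendsto_of_tendsto_of_le_of_le' tendsto_const_nhds hlin ?_ ?_ <;>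
    filter_upwards [self_mem_nhdsWithin] with t ht
  exacts [hFun_nonneg hm ht, hFun_le hm ht 1]

lemma hFun_mseq_le_sq (hN₁ : ∀ k, 0 ≤ N₁ k) (hN₂ : ∀ k, 0 < N₂ k) (hN₃ : ∀ k, 0 < N₃ k)
    (h₁₂ : MgFinite N₁ N₂) (h₂₃ : MgFinite N₂ N₃) (ht : 0 ≤ t) (k : ℕ) :
    hFun (mseq N₁) t ≤
      ((mg N₁ N₂ * mg N₂ N₃ * t) ^ (k + 1) * (mseq N₃ k * mseq N₃ 1)) ^ 2 := by
  calc hFun (mseq N₁) t ≤ mseq N₁ (k + 1 + (k + 1)) * t ^ (k + 1 + (k + 1)) :=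
        hFun_le (fun k => div_nonneg (hN₁ k) (Nat.cast_nonneg _)) ht _
    _ ≤ mg N₁ N₂ ^ (k + 1 + (k + 1)) * (mseq N₂ (k + 1) * mseq N₂ (k + 1)) *
          t ^ (k + 1 + (k + 1)) := by
        gcongr
        exact mseq_add_le hN₁ hN₂ h₁₂ (by omega)
    _ = ((mg N₁ N₂ * t) ^ (k + 1)) ^ 2 * mseq N₂ (k + 1) ^ 2 := by ring
    _ ≤ ((mg N₁ N₂ * t) ^ (k + 1)) ^ 2 *
          (mg N₂ N₃ ^ (k + 1) * (mseq N₃ k * mseq N₃ 1)) ^ 2 := by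
        have hpos : 0 ≤ mseq N₂ (k + 1) := (mseq_pos hN₂ _).le
        gcongr
        exact mseq_add_le (fun k => (hN₂ k).le) hN₃ h₂₃ (by omega)
    _ = ((mg N₁ N₂ * mg N₂ N₃ * t) ^ (k + 1) * (mseq N₃ k * mseq N₃ 1)) ^ 2 := by ring

lemma exists_pow_le_mul_of_rootTendsToInfty (hm : ∀ k, 0 < m k) (h : RootTendsToInfty m) {R : ℝ}
    (hR : 0 ≤ R) : ∃ A, ∀ k, R ^ k ≤ A * m k := by
  have hle : ∀ᶠ k : ℕ in atTop, R ^ k / m k ≤ 1 := by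
    filter_upwards [h.eventually_ge_atTop R, eventually_ne_atTop 0] with k hk hk0
    rw [div_le_one (hm k), ← Real.rpow_inv_natCast_pow (hm k).le hk0, ← one_div]
    exact pow_le_pow_left₀ hR hk k
  obtain ⟨A, hA⟩ := (isBoundedUnder_of_eventually_le hle).bddAbove_range
  exact ⟨A, fun k => (div_le_iff₀ (hm k)).1 (hA (mem_range_self k))⟩

lemma exists_factorial_div_pow_le_mul (hN : ∀ k, 0 < N k) (h : RootTendsToInfty (mseq N))
    {r σ : ℝ} (hr : 0 < r) (hσ : 0 < σ) :
    ∃ A, ∀ k : ℕ, k.factorial / r ^ k ≤ A * (σ ^ k * N k) := by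
  obtain ⟨A, hA⟩ := exists_pow_le_mul_of_rootTendsToInfty (mseq_pos hN) h
    (R := (r * σ)⁻¹) (by positivity)
  refine ⟨A, fun k => ?_⟩
  calc (k.factorial : ℝ) / r ^ k = k.factorial * σ ^ k * (r * σ)⁻¹ ^ k := by
        rw [inv_pow, mul_pow]
        field_simp
    _ ≤ k.factorial * σ ^ k * (A * mseq N k) := by
        gcongr
        exact hA k
    _ = A * (σ ^ k * N k) := by
        rw [← factorial_mul_mseq N k]
        ring

end WeightSequence

section Approximation

variable {F : Type*} [NormedAddCommGroup F] [NormedSpace ℂ F]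

/-- `g` is holomorphic on `Ω_ε`, bounded there by `K`, and approximates `f` up to `η` on
`[-1, 1]`. -/
structure IsEllipseApprox (f : ℝ → F) (K η ε : ℝ) (g : ℂ → F) : Prop where
  differentiableOn : DifferentiableOn ℂ g (OmegaE ε)
  norm_le : ∀ z ∈ OmegaE ε, ‖g z‖ ≤ K
  norm_sub_le : ∀ x ∈ Icc (-1 : ℝ) 1, ‖f x - g x‖ ≤ η

namespace IsEllipseApprox

variable {f : ℝ → F} {K η η' δ ε b x : ℝ} {g g' : ℂ → F}

lemma mono (h : IsEllipseApprox f K η ε g) (hη : η ≤ η') : IsEllipseApprox f K η' ε g :=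
  ⟨h.differentiableOn, h.norm_le, fun x hx => (h.norm_sub_le x hx).trans hη⟩

lemma nonneg (h : IsEllipseApprox f K η ε g) (hε : 0 < ε) : 0 ≤ K :=
  (norm_nonneg _).trans (h.norm_le _ (ofReal_mem_omegaE hε (x := 0) (by norm_num)))

variable [CompleteSpace F]

lemma analyticAt_ofReal (h : IsEllipseApprox f K η ε g) (hε : 0 < ε) (hx : x ∈ Icc (-1) 1) :
    AnalyticAt ℂ g x :=
  h.differentiableOn.analyticAt ((isOpen_omegaE ε).mem_nhds (ofReal_mem_omegaE hε hx))

lemma norm_iteratedDeriv_sub_le (hg : IsEllipseApprox f K η ε g)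
    (hg' : IsEllipseApprox f K η δ g') (hδ : 0 < δ) (hδε : δ ≤ ε) (hδ4 : δ ≤ 4) (hb : b < 1)
    (hx : |x| ≤ b) (k : ℕ) :
    ‖iteratedDeriv k g' x - iteratedDeriv k g x‖ ≤
      k.factorial * (2 * √(η * K)) / (δ * (1 - b) / 8) ^ k := by
  have hx1 : x ∈ Icc (-1) 1 := abs_le.1 (hx.trans hb.le)
  have hsub := omegaE_subset_omegaE hδ hδε
  have hbound (z : ℂ) (hz : z ∈ OmegaE δ) : ‖(g' - g) z‖ ≤ 2 * K := by
    rw [two_mul]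
    exact norm_sub_le_of_le (hg'.norm_le z hz) (hg.norm_le z (hsub hz))
  have hreal (y : ℝ) (hy : y ∈ Icc (-1) 1) : ‖(g' - g) y‖ ≤ 2 * η := by
    rw [Pi.sub_apply, ← sub_sub_sub_cancel_left _ _ (f y), two_mul]
    exact norm_sub_le_of_le (hg.norm_sub_le y hy) (hg'.norm_sub_le y hy)
  have hsqrt : √(2 * η * (2 * K)) = 2 * √(η * K) := by
    rw [mul_mul_mul_comm, Real.sqrt_mul (by norm_num), Real.sqrt_mul_self zero_le_two]
  rw [← iteratedDeriv_sub (hg'.analyticAt_ofReal hδ hx1).contDiffAt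
    (hg.analyticAt_ofReal (hδ.trans_le hδε) hx1).contDiffAt, ← hsqrt]
  exact norm_iteratedDeriv_ofReal_le_sqrt hb hx hδ hδ4
    (hg'.differentiableOn.sub (hg.differentiableOn.mono hsub)) hbound hreal k

lemma norm_iteratedDeriv_sub_le_of_half {N₁ N₂ N₃ : ℕ → ℝ} {c₁ c₂ : ℝ} (hN₁ : ∀ k, 0 < N₁ k)
    (hN₂ : ∀ k, 0 < N₂ k) (hN₃ : ∀ k, 0 < N₃ k) (h₁₂ : MgFinite N₁ N₂) (h₂₃ : MgFinite N₂ N₃)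
    (hc₁ : 0 ≤ c₁) (hc₂ : 0 ≤ c₂)
    (hg : IsEllipseApprox f K (c₁ * hFun (mseq N₁) (c₂ * ε)) ε g)
    (hg' : IsEllipseApprox f K (c₁ * hFun (mseq N₁) (c₂ * (ε / 2))) (ε / 2) g')
    (hε : 0 < ε) (hε1 : ε ≤ 1) (hb : b < 1) (hx : |x| ≤ b) (k : ℕ) :
    ‖iteratedDeriv k g' x - iteratedDeriv k g x‖ ≤
      2 * √(c₁ * K) * (mg N₁ N₂ * mg N₂ N₃ * c₂) * mseq N₃ 1 * ε *
        ((16 * (mg N₁ N₂ * mg N₂ N₃ * c₂) / (1 - b)) ^ k * N₃ k) := by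
  have hn₁ : ∀ k, 0 ≤ mseq N₁ k := fun k => (mseq_pos hN₁ k).le
  have hb' : 0 < 1 - b := sub_pos.2 hb
  set D := mg N₁ N₂ * mg N₂ N₃ * c₂ with hD
  set h := hFun (mseq N₁) (c₂ * ε)
  have hD0 : 0 ≤ D := mul_nonneg (mul_pos (mg_pos hN₁ hN₂ h₁₂) (mg_pos hN₂ hN₃ h₂₃)).le hc₂
  have hg'ε : IsEllipseApprox f K (c₁ * h) (ε / 2) g' :=
    hg'.mono (mul_le_mul_of_nonneg_left (hFun_mono hn₁ (by positivity)
      (mul_le_mul_of_nonneg_left (half_le_self hε.le) hc₂)) hc₁)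
  have hsqrt : √h ≤ (D * ε) ^ (k + 1) * (mseq N₃ k * mseq N₃ 1) := by
    refine Real.sqrt_le_iff.2 ⟨?_, ?_⟩
    · have h3 := mseq_pos hN₃
      exact mul_nonneg (by positivity) (mul_pos (h3 k) (h3 1)).le
    · rw [hD, mul_assoc _ c₂]
      exact hFun_mseq_le_sq (fun k => (hN₁ k).le) hN₂ hN₃ h₁₂ h₂₃ (by positivity) k
  calc ‖iteratedDeriv k g' x - iteratedDeriv k g x‖
      ≤ k.factorial * (2 * √(c₁ * h * K)) / (ε / 2 * (1 - b) / 8) ^ k :=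
        hg.norm_iteratedDeriv_sub_le hg'ε (by positivity) (by linarith) (by linarith) hb hx k
    _ = k.factorial * (2 * √(c₁ * K)) / (ε / 2 * (1 - b) / 8) ^ k * √h := by
        rw [mul_right_comm c₁, Real.sqrt_mul' _ (hFun_nonneg hn₁ (by positivity))]
        ring
    _ ≤ k.factorial * (2 * √(c₁ * K)) / (ε / 2 * (1 - b) / 8) ^ k *
          ((D * ε) ^ (k + 1) * (mseq N₃ k * mseq N₃ 1)) := by gcongr
    _ = 2 * √(c₁ * K) * D * mseq N₃ 1 * ε * ((16 * D / (1 - b)) ^ k * N₃ k) := by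
        have hpow : (D * ε) ^ k / (ε / 2 * (1 - b) / 8) ^ k = (16 * D / (1 - b)) ^ k := by
          rw [← div_pow]
          congr 1
          field_simp
          ring
        rw [← hpow, ← factorial_mul_mseq N₃ k]
        ring

end IsEllipseApprox

variable [CompleteSpace F]

theorem contDiffOn_and_norm_iteratedDerivWithin_le_of_isEllipseApprox {f : ℝ → F} {K b : ℝ}
    {η δ : ℕ → ℝ} {g : ℕ → ℂ → F} {u : ℕ → ℕ → ℝ} (hg : ∀ j, IsEllipseApprox f K (η j) (δ j) (g j))
    (hδ : ∀ j, 0 < δ j) (hη : Tendsto η atTop (nhds 0)) (hb : b < 1) (hu : ∀ k, Summable (u k))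
    (hgu : ∀ k j, ∀ x : ℝ, |x| ≤ b →
      ‖iteratedDeriv k (g (j + 1)) x - iteratedDeriv k (g j) x‖ ≤ u k j) :
    ContDiffOn ℝ (⊤ : ℕ∞) f (Ioo (-b) b) ∧ ∀ k, ∀ x ∈ Ioo (-b) b,
      ‖iteratedDerivWithin k f (Ioo (-b) b) x‖ ≤ ‖iteratedDeriv k (g 0) x‖ + ∑' j, u k j := by
  have habs (x : ℝ) (hx : x ∈ Ioo (-b) b) : |x| ≤ b := (abs_lt.2 hx).le
  have hIcc (x : ℝ) (hx : x ∈ Ioo (-b) b) : x ∈ Icc (-1) 1 := abs_le.1 ((habs x hx).trans hb.le)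
  have hmem (j : ℕ) (x : ℝ) (hx : x ∈ Ioo (-b) b) : (x : ℂ) ∈ OmegaE (δ j) :=
    ofReal_mem_omegaE (hδ j) (hIcc x hx)
  have hderiv (j k : ℕ) : EqOn (iteratedDerivWithin k (fun y : ℝ => g j y) (Ioo (-b) b))
      (fun x => iteratedDeriv k (g j) x) (Ioo (-b) b) :=
    eqOn_iteratedDerivWithin_comp_ofReal (isOpen_omegaE _) isOpen_Ioo (hmem j)
      (hg j).differentiableOn k
  have hlim (x : ℝ) (hx : x ∈ Ioo (-b) b) : Tendsto (fun j => g j x) atTop (nhds (f x)) := by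
    refine tendsto_iff_norm_sub_tendsto_zero.2 (squeeze_zero_norm (fun j => ?_) hη)
    rw [norm_norm, norm_sub_rev]
    exact (hg j).norm_sub_le x (hIcc x hx)
  obtain ⟨hsmooth, hbound⟩ := contDiffOn_and_norm_iteratedDerivWithin_le_of_summable isOpen_Ioo
    (fun j => contDiffOn_comp_ofReal (isOpen_omegaE _) isOpen_Ioo (hmem j)
      (hg j).differentiableOn) hu
    (fun k j x hx => by
      rw [hderiv _ _ hx, hderiv _ _ hx]
      exact hgu k j x (habs x hx)) hlim
  exact ⟨hsmooth, fun k x hx => by simpa only [hderiv 0 k hx] using hbound k x hx⟩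

theorem contDiffOn_and_exists_norm_iteratedDerivWithin_le {N₁ N₂ N₃ : ℕ → ℝ}
    (hN₁ : ∀ k, 0 < N₁ k) (hN₂ : ∀ k, 0 < N₂ k) (hN₃ : ∀ k, 0 < N₃ k)
    (h₁₂ : MgFinite N₁ N₂) (h₂₃ : MgFinite N₂ N₃) {f : ℝ → F} {K c₁ c₂ ε : ℝ}
    (hc₁ : 0 ≤ c₁) (hc₂ : 0 ≤ c₂) (hε : 0 < ε) (hε1 : ε ≤ 1)
    (hf : ∀ δ : ℝ, 0 < δ → δ ≤ ε →
      ∃ g, IsEllipseApprox f K (c₁ * hFun (mseq N₁) (c₂ * δ)) δ g) {b : ℝ} (hb : b < 1) :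
    ContDiffOn ℝ (⊤ : ℕ∞) f (Ioo (-b) b) ∧ ∃ A, ∀ x ∈ Ioo (-b) b, ∀ k : ℕ,
      ‖iteratedDerivWithin k f (Ioo (-b) b) x‖ ≤
        k.factorial * K / (ε * (1 - b) / 2) ^ k +
          A * ((16 * (mg N₁ N₂ * mg N₂ N₃ * c₂) / (1 - b)) ^ k * N₃ k) := by
  set C := 2 * √(c₁ * K) * (mg N₁ N₂ * mg N₂ N₃ * c₂) * mseq N₃ 1
  set w : ℕ → ℝ := fun k => (16 * (mg N₁ N₂ * mg N₂ N₃ * c₂) / (1 - b)) ^ k * N₃ k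
  set δ : ℕ → ℝ := fun j => ε / 2 ^ j with hδdef
  have hδ (j : ℕ) : 0 < δ j := by positivity
  have hδε (j : ℕ) : δ j ≤ ε := div_le_self hε.le (one_le_pow₀ one_le_two)
  have hδhalf (j : ℕ) : δ (j + 1) = δ j / 2 := by rw [hδdef, div_div, ← pow_succ]
  have hsum : Summable δ := by
    simpa only [hδdef, div_eq_mul_inv, one_mul, inv_pow] using summable_geometric_two.mul_left ε
  choose g hg using fun j => hf (δ j) (hδ j) (hδε j)
  have hη : Tendsto (fun j => c₁ * hFun (mseq N₁) (c₂ * δ j)) atTop (nhds 0) := by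
    have harg : Tendsto (fun j => c₂ * δ j) atTop (nhdsWithin 0 (Ici 0)) :=
      tendsto_nhdsWithin_iff.2 ⟨by simpa only [mul_zero] using hsum.tendsto_atTop_zero.const_mul c₂,
        .of_forall fun j => mul_nonneg hc₂ (hδ j).le⟩
    simpa only [mul_zero, Function.comp_apply] using
      ((tendsto_hFun_zero fun k => (mseq_pos hN₁ k).le).comp harg).const_mul c₁
  obtain ⟨hsmooth, hbound⟩ := contDiffOn_and_norm_iteratedDerivWithin_le_of_isEllipseApprox hg hδ
    hη hb (fun k => (hsum.mul_left C).mul_right (w k)) fun k j x hx =>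
      (hg j).norm_iteratedDeriv_sub_le_of_half hN₁ hN₂ hN₃ h₁₂ h₂₃ hc₁ hc₂
        (hδhalf j ▸ hg (j + 1)) (hδ j) ((hδε j).trans hε1) hb hx k
  refine ⟨hsmooth, C * ∑' j, δ j, fun x hx k => (hbound k x hx).trans ?_⟩
  rw [tsum_mul_right, tsum_mul_left]
  have hδ0 : δ 0 = ε := by simp only [hδdef, pow_zero, div_one]
  exact add_le_add_left (norm_iteratedDeriv_ofReal_le hb (abs_lt.2 hx).le hε hε1
    (hδ0 ▸ (hg 0).differentiableOn) (hδ0 ▸ (hg 0).norm_le) k) _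

theorem statement14_general {N₁ N₂ N₃ : ℕ → ℝ} (hN₁ : ∀ k, 0 < N₁ k) (hN₂ : ∀ k, 0 < N₂ k)
    (hN₃ : ∀ k, 0 < N₃ k) (hroot : RootTendsToInfty (mseq N₃)) (h₁₂ : MgFinite N₁ N₂)
    (h₂₃ : MgFinite N₂ N₃) {f : ℝ → F} {K c₁ c₂ ε₀ : ℝ} (hc₁ : 0 ≤ c₁) (hc₂ : 0 < c₂)
    (hε₀ : 0 < ε₀)
    (hf : ∀ ε : ℝ, 0 < ε → ε ≤ ε₀ →
      ∃ g, IsEllipseApprox f K (c₁ * hFun (mseq N₁) (c₂ * ε)) ε g)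
    {b σ : ℝ} (hb : b < 1) (hσ : 16 * (mg N₁ N₂ * mg N₂ N₃ * c₂) / (1 - b) ≤ σ) :
    ContDiffOn ℝ (⊤ : ℕ∞) f (Ioo (-b) b) ∧ ∃ A : ℝ, ∀ x ∈ Ioo (-b) b, ∀ k : ℕ,
      ‖iteratedFDerivWithin ℝ k f (Ioo (-b) b) x‖ ≤ A * σ ^ k * N₃ k := by
  have : 0 < 1 - b := sub_pos.2 hb
  have hD : 0 < mg N₁ N₂ * mg N₂ N₃ * c₂ :=
    mul_pos (mul_pos (mg_pos hN₁ hN₂ h₁₂) (mg_pos hN₂ hN₃ h₂₃)) hc₂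
  set σ₀ := 16 * (mg N₁ N₂ * mg N₂ N₃ * c₂) / (1 - b)
  have hσ₀ : 0 < σ₀ := by positivity
  have hε : 0 < min ε₀ 1 := lt_min hε₀ one_pos
  obtain ⟨hsmooth, A, hA⟩ := contDiffOn_and_exists_norm_iteratedDerivWithin_le hN₁ hN₂ hN₃ h₁₂ h₂₃
    hc₁ hc₂.le hε (min_le_right _ _) (fun δ hδ hδε => hf δ hδ (hδε.trans (min_le_left _ _))) hb
  obtain ⟨A', hA'⟩ := exists_factorial_div_pow_le_mul hN₃ hroot
    (by positivity : 0 < min ε₀ 1 * (1 - b) / 2) (hσ₀.trans_le hσ)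
  obtain ⟨g, hg⟩ := hf ε₀ hε₀ le_rfl
  have hK : 0 ≤ K := hg.nonneg hε₀
  refine ⟨hsmooth, K * A' + |A|, fun x hx k => ?_⟩
  have hNk : 0 < N₃ k := hN₃ k
  rw [norm_iteratedFDerivWithin_eq_norm_iteratedDerivWithin]
  calc ‖iteratedDerivWithin k f (Ioo (-b) b) x‖
      ≤ K * (k.factorial / (min ε₀ 1 * (1 - b) / 2) ^ k) + A * (σ₀ ^ k * N₃ k) := by
        rw [← mul_div_assoc, mul_comm K]
        exact hA x hx k
    _ ≤ K * (A' * (σ ^ k * N₃ k)) + |A| * (σ ^ k * N₃ k) := by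
        gcongr
        exacts [hA' k, le_abs_self A]
    _ = (K * A' + |A|) * σ ^ k * N₃ k := by ring

end Approximation

/-- from a family of uniformly bounded holomorphic approximations on the
ellipses `Ω_ε` with rate `h_{n⁽¹⁾}`, the approximated function is ultradifferentiable of
class `B^{N⁽³⁾}_σ` on `(-b, b)` for every `b < 1`. -/
theorem statement14 : ∃ E : ℝ, 0 < E ∧
    ∀ N₁ N₂ N₃ : ℕ → ℝ, IsWeightSeq N₁ → IsWeightSeq N₂ → IsWeightSeq N₃ →
      RootTendsToInfty (mseq N₁) → RootTendsToInfty (mseq N₂) →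
      RootTendsToInfty (mseq N₃) →
      MgFinite N₁ N₂ → MgFinite N₂ N₃ →
      ∀ f : ℝ → ℂ, ∀ K c₁ c₂ ε₀ : ℝ, 0 < K → 0 < c₁ → 0 < c₂ → 0 < ε₀ →
      (∀ ε : ℝ, 0 < ε → ε ≤ ε₀ → ∃ fε : ℂ → ℂ,
        DifferentiableOn ℂ fε (OmegaE ε) ∧ ContinuousOn fε (closure (OmegaE ε)) ∧
        (∀ z ∈ OmegaE ε, ‖fε z‖ ≤ K) ∧
        ∀ x ∈ Icc (-1 : ℝ) 1, ‖f x - fε (x : ℂ)‖ ≤ c₁ * hFun (mseq N₁) (c₂ * ε)) →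
      ∀ b : ℝ, 0 < b → b < 1 →
        ContDiffOn ℝ (⊤ : ℕ∞) f (Ioo (-b) b) ∧
        ∃ A : ℝ, ∀ x ∈ Ioo (-b) b, ∀ k : ℕ,
          ‖iteratedFDerivWithin ℝ k f (Ioo (-b) b) x‖ ≤
            A * (2 * Real.exp 1 * mg N₁ N₂ * mg N₂ N₃ * c₂ / (E * (1 - b))) ^ k *
              N₃ k := by
  refine ⟨Real.exp 1 / 8, by positivity, fun N₁ N₂ N₃ hN₁ hN₂ hN₃ _ _ hroot h₁₂ h₂₃ f K c₁ c₂ ε₀ _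
    hc₁ hc₂ hε₀ hf b _ hb => ?_⟩
  exact statement14_general hN₁.2.1 hN₂.2.1 hN₃.2.1 hroot h₁₂ h₂₃ hc₁.le hc₂ hε₀
    (fun ε h0 h1 => (hf ε h0 h1).imp fun _ h => ⟨h.1, h.2.2.1, h.2.2.2⟩) hb
    (le_of_eq (by field_simp; ring))
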